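/- arXiv:2007.02133 — 2 statements merged into one kernel-verified Lean document; each statement's English description precedes it below -/
import Mathlib

section
/- Let G be a connected finite simple graph. For every signal x ∈ ℝ^n, the sequence of vectors h^{(K)} = ((I + P̃)/2)^K x, obtained by applying K layers of the renormalized graph convolution with residual connection to x, converges entrywise as K → ∞ to the vector π = (⟨D̃^{1/2}𝟙, x⟩ / (2m + n)) · D̃^{1/2}𝟙. -/
/-!
By the parallelogram identity, an averaged operator `T = (1 - α) I + α f` of a linear contraction
`f` of a Hilbert space satisfies `‖T x‖² ≤ ‖x‖² - α (1 - α) ‖x - f x‖²`. Applied along the orbit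
`T ^ K x` this telescopes, so `T ^ K (x - f x) → 0`. The range of `I - f` is dense in the orthogonal
complement of the fixed space of `f`, hence `T ^ K` converges strongly to the orthogonal projection
onto that fixed space.

The matrix `P̃` is a contraction by the Schur test, being symmetric, entrywise nonnegative, and
fixing the positive vector `D̃^{1/2}𝟙`. As `I - P̃ = D̃^{-1/2} (D - A) D̃^{-1/2}` and the Laplacian
`D - A` of a connected graph kills only constants, the fixed space of `P̃` is the line through
`D̃^{1/2}𝟙`, and `‖D̃^{1/2}𝟙‖² = ∑ (d_j + 1) = 2m + n`.
-/

open Matrix Finset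

/-- Diagonal matrix `D̃^{1/2}` with entries `√(dⱼ+1)`. -/
noncomputable def DtildeHalf {n : ℕ} (G : SimpleGraph (Fin n)) [DecidableRel G.Adj] :
    Matrix (Fin n) (Fin n) ℝ :=
  Matrix.diagonal fun j => Real.sqrt ((G.degree j : ℝ) + 1)

/-- Diagonal matrix `D̃^{-1/2}` with entries `1/√(dⱼ+1)`. -/
noncomputable def DtildeInvHalf {n : ℕ} (G : SimpleGraph (Fin n)) [DecidableRel G.Adj] :
    Matrix (Fin n) (Fin n) ℝ :=
  Matrix.diagonal fun j => 1 / Real.sqrt ((G.degree j : ℝ) + 1)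

/-- Diagonal matrix `D̃^{-1}` with entries `1/(dⱼ+1)`. -/
noncomputable def DtildeInv {n : ℕ} (G : SimpleGraph (Fin n)) [DecidableRel G.Adj] :
    Matrix (Fin n) (Fin n) ℝ :=
  Matrix.diagonal fun j => 1 / ((G.degree j : ℝ) + 1)

/-- Adjacency matrix of the self-looped graph: `Ã = A + I`. -/
noncomputable def Atilde {n : ℕ} (G : SimpleGraph (Fin n)) [DecidableRel G.Adj] :
    Matrix (Fin n) (Fin n) ℝ :=
  G.adjMatrix ℝ + 1

/-- Renormalized graph convolution matrix `P̃ = D̃^{-1/2} Ã D̃^{-1/2}`. -/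
noncomputable def Ptilde {n : ℕ} (G : SimpleGraph (Fin n)) [DecidableRel G.Adj] :
    Matrix (Fin n) (Fin n) ℝ :=
  DtildeInvHalf G * Atilde G * DtildeInvHalf G

/-- Normalized Laplacian of the self-looped graph: `L̃ = I - P̃`. -/
noncomputable def Ltilde {n : ℕ} (G : SimpleGraph (Fin n)) [DecidableRel G.Adj] :
    Matrix (Fin n) (Fin n) ℝ :=
  1 - Ptilde G

/-- Lazy random-walk transition matrix `W = (I + Ã D̃^{-1})/2` of the self-looped graph. -/
noncomputable def lazyW {n : ℕ} (G : SimpleGraph (Fin n)) [DecidableRel G.Adj] :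
    Matrix (Fin n) (Fin n) ℝ :=
  (2 : ℝ)⁻¹ • (1 + Atilde G * DtildeInv G)

section Averaged

open Filter Topology

variable {𝕜 E : Type*} [RCLike 𝕜] [NormedAddCommGroup E] [InnerProductSpace 𝕜 E]

lemma norm_convexComb_sq (α : ℝ) (x y : E) :
    ‖((1 - α : ℝ) : 𝕜) • x + (α : 𝕜) • y‖ ^ 2 =
      (1 - α) * ‖x‖ ^ 2 + α * ‖y‖ ^ 2 - α * (1 - α) * ‖x - y‖ ^ 2 := by
  rw [norm_add_sq (𝕜 := 𝕜), norm_sub_sq (𝕜 := 𝕜), inner_smul_left, inner_smul_right,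
    RCLike.conj_ofReal, RCLike.re_ofReal_mul, RCLike.re_ofReal_mul, norm_smul, norm_smul,
    mul_pow, mul_pow, RCLike.norm_ofReal, RCLike.norm_ofReal, sq_abs, sq_abs]
  ring

/-- The averaged operator `(1 - α) I + α f` of fixed-point theory: a layer `f` together with a
residual connection of weight `1 - α`. The weight is a real number, also over complex scalars. -/
noncomputable def averaged (α : ℝ) (f : E →L[𝕜] E) : E →L[𝕜] E :=
  ((1 - α : ℝ) : 𝕜) • 1 + (α : 𝕜) • f

variable {α : ℝ} {f : E →L[𝕜] E}

lemma averaged_apply (x : E) :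
    averaged α f x = ((1 - α : ℝ) : 𝕜) • x + (α : 𝕜) • f x := rfl

lemma averaged_apply_of_apply_eq_self {x : E} (hx : f x = x) : averaged α f x = x := by
  rw [averaged_apply, hx, ← add_smul, ← RCLike.ofReal_add, sub_add_cancel, RCLike.ofReal_one,
    one_smul]

variable (α f) in
lemma commute_averaged : Commute (averaged α f) f :=
  ((Commute.one_left f).smul_left _).add_left ((Commute.refl f).smul_left _)

lemma norm_averaged_apply_sq_le (hf : ‖f‖ ≤ 1) (hα : 0 ≤ α) (x : E) :
    ‖averaged α f x‖ ^ 2 ≤ ‖x‖ ^ 2 - α * (1 - α) * ‖x - f x‖ ^ 2 := by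
  have hfx : ‖f x‖ ^ 2 ≤ ‖x‖ ^ 2 := by
    gcongr
    simpa using f.le_of_opNorm_le hf x
  rw [averaged_apply, norm_convexComb_sq]
  linarith [mul_le_mul_of_nonneg_left hfx hα]

lemma norm_averaged_apply_le (hf : ‖f‖ ≤ 1) (h₀ : 0 ≤ α) (h₁ : α ≤ 1) (x : E) :
    ‖averaged α f x‖ ≤ ‖x‖ := by
  have hdefect : 0 ≤ α * (1 - α) * ‖x - f x‖ ^ 2 :=
    mul_nonneg (mul_nonneg h₀ (sub_nonneg.2 h₁)) (sq_nonneg _)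
  exact (sq_le_sq₀ (norm_nonneg _) (norm_nonneg _)).1
    ((norm_averaged_apply_sq_le hf h₀ x).trans (sub_le_self _ hdefect))

lemma norm_averaged_pow_le_one (hf : ‖f‖ ≤ 1) (h₀ : 0 ≤ α) (h₁ : α ≤ 1) (K : ℕ) :
    ‖averaged α f ^ K‖ ≤ 1 := by
  have hT : ‖averaged α f‖ ≤ 1 := ContinuousLinearMap.opNorm_le_bound _ zero_le_one fun x => by
    simpa using norm_averaged_apply_le hf h₀ h₁ x
  cases K with
  | zero => exact ContinuousLinearMap.norm_id_le
  | succ K => exact (norm_pow_le' _ K.succ_pos).trans (pow_le_one₀ (norm_nonneg _) hT)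

lemma tendsto_averaged_pow_apply_sub (hf : ‖f‖ ≤ 1) (h₀ : 0 < α) (h₁ : α < 1) (x : E) :
    Tendsto (fun K : ℕ => (averaged α f ^ K) (x - f x)) atTop (𝓝 0) := by
  set T := averaged α f
  have hα : 0 < α * (1 - α) := mul_pos h₀ (sub_pos.2 h₁)
  have hdecrease (K : ℕ) : α * (1 - α) * ‖(T ^ K) (x - f x)‖ ^ 2 ≤
      ‖(T ^ K) x‖ ^ 2 - ‖(T ^ (K + 1)) x‖ ^ 2 := by
    have hcomm : (T ^ K) (f x) = f ((T ^ K) x) :=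
      DFunLike.congr_fun ((commute_averaged α f).pow_left K).eq x
    have h := norm_averaged_apply_sq_le hf h₀.le ((T ^ K) x)
    rw [pow_succ' T K, map_sub, hcomm, mul_apply_eq_comp]
    linarith
  have hsum : Summable fun K => α * (1 - α) * ‖(T ^ K) (x - f x)‖ ^ 2 := by
    refine summable_of_sum_range_le (c := ‖x‖ ^ 2) (fun K => by positivity) fun N => ?_
    calc ∑ K ∈ range N, α * (1 - α) * ‖(T ^ K) (x - f x)‖ ^ 2
        ≤ ∑ K ∈ range N, (‖(T ^ K) x‖ ^ 2 - ‖(T ^ (K + 1)) x‖ ^ 2) :=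
          sum_le_sum fun K _ => hdecrease K
      _ = ‖x‖ ^ 2 - ‖(T ^ N) x‖ ^ 2 := by rw [sum_range_sub']; simp
      _ ≤ ‖x‖ ^ 2 := sub_le_self _ (sq_nonneg _)
  have hsq := ((summable_mul_left_iff hα.ne').1 hsum).tendsto_atTop_zero
  rw [tendsto_zero_iff_norm_tendsto_zero]
  simpa using hsq.sqrt

lemma orthogonal_range_one_sub_le_eqLocus (hf : ‖f‖ ≤ 1) :
    (1 - f).rangeᗮ ≤ f.eqLocus (1 : E →L[𝕜] E) := by
  intro x hx
  have horth (y : E) : inner 𝕜 (y - f y) x = 0 := hx _ ⟨y, rfl⟩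
  refine eq_of_norm_le_re_inner_eq_norm_sq (𝕜 := 𝕜) ?_ ?_
  · simpa using f.le_of_opNorm_le hf x
  · have hinner : inner 𝕜 (f x) x = inner 𝕜 x x := by
      rw [← sub_eq_zero, ← neg_eq_zero, neg_sub, ← inner_sub_left, horth]
    simp [hinner]

theorem tendsto_averaged_pow_apply_starProjection [CompleteSpace E] (hf : ‖f‖ ≤ 1) (h₀ : 0 < α)
    (h₁ : α < 1) (x : E) :
    Tendsto (fun K : ℕ => (averaged α f ^ K) x) atTop
      (𝓝 ((f.eqLocus (1 : E →L[𝕜] E)).starProjection x)) := by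
  set F := f.eqLocus (1 : E →L[𝕜] E)
  set T := averaged α f
  have hequi : UniformEquicontinuous fun (K : ℕ) (y : E) => (T ^ K) y :=
    LipschitzWith.uniformEquicontinuous _ 1 fun K =>
      (T ^ K).lipschitz.weaken (norm_averaged_pow_le_one hf h₀.le h₁.le K)
  have hclosed : IsClosed {y : E | Tendsto (fun K : ℕ => (T ^ K) y) atTop (𝓝 0)} :=
    hequi.equicontinuous.isClosed_setOfPred_tendsto continuous_const
  have hrange : Fᗮ ≤ (1 - f).range.topologicalClosure := by
    rw [← Submodule.orthogonal_orthogonal_eq_closure]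
    exact Submodule.orthogonal_le (orthogonal_range_one_sub_le_eqLocus hf)
  have horth : Tendsto (fun K : ℕ => (T ^ K) (x - F.starProjection x)) atTop (𝓝 0) :=
    closure_minimal (Set.range_subset_iff.2 (tendsto_averaged_pow_apply_sub hf h₀ h₁)) hclosed
      (hrange (F.sub_starProjection_mem_orthogonal x))
  have hfix (K : ℕ) : (T ^ K) (F.starProjection x) = F.starProjection x := by
    rw [FunLike.coe_pow_eq_iterate]
    exact Function.iterate_fixed (averaged_apply_of_apply_eq_self
      (F.starProjection_apply_mem x)) K
  simpa only [map_sub, hfix, sub_add_cancel, zero_add]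
    using horth.add_const (F.starProjection x)

end Averaged

section SchurTest

open scoped Matrix.Norms.L2Operator

variable {𝕜 m n : Type*} [RCLike 𝕜] [Fintype n] {A : Matrix m n 𝕜} {q : n → ℝ}

lemma norm_mulVec_apply_sq_le (hq : ∀ j, 0 < q j) (x : n → 𝕜) (i : m) :
    ‖(A *ᵥ x) i‖ ^ 2 ≤ (∑ j, ‖A i j‖ * q j) * ∑ j, ‖A i j‖ * (‖x j‖ ^ 2 / q j) :=
  calc ‖(A *ᵥ x) i‖ ^ 2
      ≤ (∑ j, ‖A i j‖ * ‖x j‖) ^ 2 := by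
        gcongr
        exact (norm_sum_le _ _).trans_eq (by simp_rw [norm_mul])
    _ ≤ (∑ j, ‖A i j‖ * q j) * ∑ j, ‖A i j‖ * (‖x j‖ ^ 2 / q j) := by
        refine sum_sq_le_sum_mul_sum_of_sq_le_mul _ (fun j _ => ?_) (fun j _ => ?_) fun j _ => ?_
        · exact mul_nonneg (norm_nonneg _) (hq j).le
        · exact mul_nonneg (norm_nonneg _) (div_nonneg (sq_nonneg _) (hq j).le)
        · have := (hq j).ne'
          exact le_of_eq (by field_simp)

theorem schurTest_l2_opNorm_le [Fintype m] [DecidableEq n] {p : m → ℝ} {a b : ℝ} (ha : 0 ≤ a)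
    (hq : ∀ j, 0 < q j) (hrow : ∀ i, ∑ j, ‖A i j‖ * q j ≤ a * p i)
    (hcol : ∀ j, ∑ i, p i * ‖A i j‖ ≤ b * q j) : ‖A‖ ≤ √(a * b) := by
  refine ContinuousLinearMap.opNorm_le_bound _ (Real.sqrt_nonneg _) fun x => ?_
  have hweight (j : n) : 0 ≤ ‖x j‖ ^ 2 / q j := div_nonneg (sq_nonneg _) (hq j).le
  have hsq : ∑ i, ‖(A *ᵥ x) i‖ ^ 2 ≤ a * b * ∑ j, ‖x j‖ ^ 2 :=
    calc ∑ i, ‖(A *ᵥ x) i‖ ^ 2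
        ≤ ∑ i, a * p i * ∑ j, ‖A i j‖ * (‖x j‖ ^ 2 / q j) := by
          refine sum_le_sum fun i _ => (norm_mulVec_apply_sq_le hq x i).trans ?_
          exact mul_le_mul_of_nonneg_right (hrow i)
            (sum_nonneg fun j _ => mul_nonneg (norm_nonneg _) (hweight j))
      _ = a * ∑ j, (‖x j‖ ^ 2 / q j) * ∑ i, p i * ‖A i j‖ := by
          simp_rw [mul_sum]
          rw [sum_comm]
          refine sum_congr rfl fun j _ => sum_congr rfl fun i _ => ?_
          ring
      _ ≤ a * ∑ j, (‖x j‖ ^ 2 / q j) * (b * q j) :=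
          mul_le_mul_of_nonneg_left
            (sum_le_sum fun j _ => mul_le_mul_of_nonneg_left (hcol j) (hweight j)) ha
      _ = a * b * ∑ j, ‖x j‖ ^ 2 := by
          rw [mul_assoc, mul_sum _ _ b]
          refine congrArg (a * ·) (sum_congr rfl fun j _ => ?_)
          have := (hq j).ne'
          field_simp
  rw [EuclideanSpace.norm_eq, EuclideanSpace.norm_eq, ← Real.sqrt_mul' _ (by positivity)]
  exact Real.sqrt_le_sqrt hsq

theorem l2_opNorm_le_one_of_isSymm_of_mulVec_eq_self [DecidableEq n] {P : Matrix n n ℝ}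
    (hP : P.IsSymm) (hnonneg : ∀ i j, 0 ≤ P i j) (hq : ∀ j, 0 < q j) (hfix : P *ᵥ q = q) :
    ‖P‖ ≤ 1 := by
  have hrow (i : n) : ∑ j, ‖P i j‖ * q j = 1 * q i := by
    simp_rw [Real.norm_of_nonneg (hnonneg _ _), one_mul]
    exact congrFun hfix i
  have hcol (j : n) : ∑ i, q i * ‖P i j‖ = 1 * q j := by
    simp_rw [← hrow j, mul_comm (q _), hP.apply]
  simpa using schurTest_l2_opNorm_le zero_le_one hq (fun i => (hrow i).le) fun j => (hcol j).le

end SchurTest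

lemma toEuclideanCLM_convexComb {𝕜 n : Type*} [RCLike 𝕜] [Fintype n] [DecidableEq n] (α : ℝ)
    (P : Matrix n n 𝕜) :
    toEuclideanCLM (𝕜 := 𝕜) (((1 - α : ℝ) : 𝕜) • 1 + (α : 𝕜) • P) =
      averaged α (toEuclideanCLM (𝕜 := 𝕜) P) := by
  simp only [averaged, map_add, map_smul, map_one]

section SqrtDegree

variable {V : Type*} [Fintype V] (G : SimpleGraph V) [DecidableRel G.Adj]

/-- The vector `D̃^{1/2}𝟙`, which spans the fixed space of `P̃` for a connected graph. -/
noncomputable def sqrtDegree (v : V) : ℝ := √((G.degree v : ℝ) + 1)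

lemma sqrtDegree_pos (v : V) : 0 < sqrtDegree G v := Real.sqrt_pos.2 (by positivity)

lemma sqrtDegree_sq (v : V) : sqrtDegree G v ^ 2 = G.degree v + 1 := Real.sq_sqrt (by positivity)

lemma sum_sqrtDegree_sq :
    ∑ v, sqrtDegree G v ^ 2 = 2 * (#G.edgeFinset : ℝ) + Fintype.card V := by
  simp_rw [sqrtDegree_sq]
  rw [sum_add_distrib, ← Nat.cast_sum, G.sum_degrees_eq_twice_card_edges]
  simp

end SqrtDegree

section RenormalizedConvolution

open Filter Topology
open scoped Matrix.Norms.L2Operator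

variable {n : ℕ} (G : SimpleGraph (Fin n)) [DecidableRel G.Adj]

lemma DtildeInvHalf_eq_diagonal : DtildeInvHalf G = diagonal fun i => (sqrtDegree G i)⁻¹ := by
  simp [DtildeInvHalf, sqrtDegree]

lemma DtildeInvHalf_mulVec_apply (y : Fin n → ℝ) (i : Fin n) :
    (DtildeInvHalf G *ᵥ y) i = y i / sqrtDegree G i := by
  rw [DtildeInvHalf_eq_diagonal, mulVec_diagonal, inv_mul_eq_div]

lemma DtildeInvHalf_mulVec_sqrtDegree : DtildeInvHalf G *ᵥ sqrtDegree G = fun _ => 1 := by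
  ext i
  rw [DtildeInvHalf_mulVec_apply, div_self (sqrtDegree_pos G i).ne']

lemma DtildeInvHalf_mulVec_eq_zero_iff {y : Fin n → ℝ} : DtildeInvHalf G *ᵥ y = 0 ↔ y = 0 := by
  simp [funext_iff, DtildeInvHalf_mulVec_apply, (sqrtDegree_pos G _).ne']

lemma DtildeInvHalf_mul_Dtilde_mul_DtildeInvHalf :
    DtildeInvHalf G * (G.degMatrix ℝ + 1) * DtildeInvHalf G = 1 := by
  have hentry (i : Fin n) : (sqrtDegree G i)⁻¹ * (G.degree i + 1) * (sqrtDegree G i)⁻¹ = 1 := by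
    have := (sqrtDegree_pos G i).ne'
    rw [← sqrtDegree_sq]
    field_simp
  simp [DtildeInvHalf_eq_diagonal, SimpleGraph.degMatrix, ← diagonal_one, hentry]

-- The self-loops cancel in `D̃ - Ã = D - A`.
lemma Ltilde_eq : Ltilde G = DtildeInvHalf G * G.lapMatrix ℝ * DtildeInvHalf G := by
  rw [Ltilde, ← DtildeInvHalf_mul_Dtilde_mul_DtildeInvHalf G, Ptilde, Atilde,
    SimpleGraph.lapMatrix]
  noncomm_ring

lemma Ptilde_mulVec_eq_self_iff {y : Fin n → ℝ} :
    Ptilde G *ᵥ y = y ↔ G.lapMatrix ℝ *ᵥ (DtildeInvHalf G *ᵥ y) = 0 := by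
  rw [eq_comm, ← sub_eq_zero, ← DtildeInvHalf_mulVec_eq_zero_iff G (y := G.lapMatrix ℝ *ᵥ _),
    mulVec_mulVec, mulVec_mulVec, ← Ltilde_eq, Ltilde, sub_mulVec, one_mulVec]

lemma Ptilde_mulVec_sqrtDegree : Ptilde G *ᵥ sqrtDegree G = sqrtDegree G := by
  rw [Ptilde_mulVec_eq_self_iff, DtildeInvHalf_mulVec_sqrtDegree, G.lapMatrix_mulVec_const_eq_zero]

lemma exists_smul_sqrtDegree_of_Ptilde_mulVec_eq_self (hconn : G.Connected) {y : Fin n → ℝ}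
    (hy : Ptilde G *ᵥ y = y) : ∃ c : ℝ, c • sqrtDegree G = y := by
  rw [Ptilde_mulVec_eq_self_iff, G.lapMatrix_mulVec_eq_zero_iff_forall_reachable] at hy
  obtain ⟨i₀⟩ := hconn.nonempty
  refine ⟨(DtildeInvHalf G *ᵥ y) i₀, funext fun i => ?_⟩
  rw [Pi.smul_apply, smul_eq_mul, hy i₀ i (hconn i₀ i), DtildeInvHalf_mulVec_apply,
    div_mul_cancel₀ _ (sqrtDegree_pos G i).ne']

lemma Ptilde_nonneg (i j : Fin n) : 0 ≤ Ptilde G i j := by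
  have hA : 0 ≤ Atilde G i j := by
    rw [Atilde, Matrix.add_apply, SimpleGraph.adjMatrix_apply, one_apply]
    positivity
  rw [Ptilde, DtildeInvHalf_eq_diagonal, mul_diagonal, diagonal_mul]
  have := (sqrtDegree_pos G i).le
  have := (sqrtDegree_pos G j).le
  positivity

lemma isSymm_Ptilde : (Ptilde G).IsSymm := by
  simp [IsSymm, Ptilde, DtildeInvHalf, Atilde, mul_assoc]

lemma l2_opNorm_Ptilde_le_one : ‖Ptilde G‖ ≤ 1 :=
  l2_opNorm_le_one_of_isSymm_of_mulVec_eq_self (isSymm_Ptilde G) (Ptilde_nonneg G)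
    (sqrtDegree_pos G) (Ptilde_mulVec_sqrtDegree G)

lemma eqLocus_toEuclideanCLM_Ptilde (hconn : G.Connected) :
    (toEuclideanCLM (𝕜 := ℝ) (Ptilde G)).eqLocus
        (1 : EuclideanSpace ℝ (Fin n) →L[ℝ] EuclideanSpace ℝ (Fin n)) =
      ℝ ∙ WithLp.toLp 2 (sqrtDegree G) := by
  ext y
  have hfixed : toEuclideanCLM (𝕜 := ℝ) (Ptilde G) y = y ↔ Ptilde G *ᵥ y.ofLp = y.ofLp :=
    (WithLp.ofLp_injective 2).eq_iff.symm
  rw [Submodule.mem_span_singleton]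
  refine hfixed.trans ⟨fun hy => ?_, ?_⟩
  · obtain ⟨c, hc⟩ := exists_smul_sqrtDegree_of_Ptilde_mulVec_eq_self G hconn hy
    exact ⟨c, WithLp.ofLp_injective 2 hc⟩
  · rintro ⟨c, rfl⟩
    rw [WithLp.ofLp_smul, mulVec_smul, Ptilde_mulVec_sqrtDegree]

theorem gcn_residual_converges_general (hconn : G.Connected) {α : ℝ} (h₀ : 0 < α) (h₁ : α < 1)
    (x : Fin n → ℝ) (j : Fin n) :
    Tendsto (fun K : ℕ => (((1 - α) • 1 + α • Ptilde G) ^ K *ᵥ x) j) atTop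
      (𝓝 (((∑ i, √((G.degree i : ℝ) + 1) * x i) / (2 * (#G.edgeFinset : ℝ) + n)) *
        √((G.degree j : ℝ) + 1))) := by
  have hlim := tendsto_averaged_pow_apply_starProjection
    (f := toEuclideanCLM (𝕜 := ℝ) (Ptilde G)) (l2_opNorm_Ptilde_le_one G) h₀ h₁ (WithLp.toLp 2 x)
  have hinner : inner ℝ (WithLp.toLp 2 (sqrtDegree G)) (WithLp.toLp 2 x) =
      ∑ i, sqrtDegree G i * x i := by
    simp [PiLp.inner_apply, mul_comm]
  have hnorm : ‖WithLp.toLp 2 (sqrtDegree G)‖ ^ 2 = 2 * (#G.edgeFinset : ℝ) + n := by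
    simp [EuclideanSpace.real_norm_sq_eq, sum_sqrtDegree_sq]
  simp_rw [eqLocus_toEuclideanCLM_Ptilde G hconn, Submodule.starProjection_singleton, hinner, hnorm,
    ← toEuclideanCLM_convexComb, ← map_pow, toEuclideanCLM_toLp] at hlim
  exact ((EuclideanSpace.proj j).continuous.tendsto _).comp hlim

end RenormalizedConvolution

/-- For a connected finite simple graph, `h^{(K)} = ((I+P̃)/2)^K x` converges
entrywise to `π = (⟨D̃^{1/2}𝟙, x⟩/(2m+n)) · D̃^{1/2}𝟙`. -/
theorem gcn_residual_converges {n : ℕ} (G : SimpleGraph (Fin n)) [DecidableRel G.Adj]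
    (hconn : G.Connected) (x : Fin n → ℝ) (j : Fin n) :
    Filter.Tendsto
      (fun K : ℕ => ((((2 : ℝ)⁻¹ • (1 + Ptilde G)) ^ K).mulVec x) j)
      Filter.atTop
      (nhds (((∑ i, Real.sqrt ((G.degree i : ℝ) + 1) * x i) /
          (2 * (G.edgeFinset.card : ℝ) + (n : ℝ))) * Real.sqrt ((G.degree j : ℝ) + 1))) := by
  convert gcn_residual_converges_general G hconn (α := 2⁻¹) (by norm_num) (by norm_num) x j using 4
  module
end

section
/- Let G be a finite simple graph with normalized Laplacian L̃ of its self-looped graph, let K ≥ 1, and let θ_0, …, θ_{K−1} ∈ ℝ be arbitrary polynomial filter coefficients such that each derived coefficient c_ℓ := (−1)^ℓ ∑_{k=ℓ}^{K−1} θ_k · C(k, ℓ) is nonzero for ℓ = 0, …, K−1. Then there exist scalars γ_0, …, γ_{K−1} ∈ ℝ such that the nested-product filter realized by a K-layer GCNII matches the target filter: ∑_{ℓ=0}^{K−1} (∏_{k=K−ℓ−1}^{K−1} γ_k) · (I − L̃)^ℓ = ∑_{k=0}^{K−1} θ_k L̃^k (as matrices, hence applied to every signal x ∈ ℝ^n).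 -/
/-!
With `P = 1 - L`, the binomial theorem rewrites `∑ θ_k L ^ k = ∑ θ_k (1 - P) ^ k` in powers of `P`,
with coefficients exactly the `c_ℓ`. A GCNII with parameters `γ_{K-1}, γ_{K-2}, …` has as its
coefficients the partial products of that sequence, so taking the consecutive ratios
`c_0, c_1 / c_0, c_2 / c_1, …` for the parameters makes the products telescope to the `c_ℓ`.
-/

open Matrix Finset

/-- The coefficient `c_ℓ` of `P ^ ℓ` in the polynomial filter `∑ k < K, θ_k (1 - P) ^ k`. The
summation range `Icc ℓ (K - 1)` stands for `ℓ ≤ k < K`, where `K ≥ 1` because subtraction is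
truncated. -/
def derivedCoeff {R : Type*} [CommRing R] (θ : ℕ → R) (K ℓ : ℕ) : R :=
  (-1) ^ ℓ * ∑ k ∈ Icc ℓ (K - 1), θ k * (k.choose ℓ : R)

section BinomialExpansion

variable {R A : Type*} [CommRing R] [Ring A] [Algebra R A]

theorem one_sub_pow_eq_sum_smul (a : A) (k : ℕ) :
    (1 - a) ^ k = ∑ ℓ ∈ range (k + 1), ((-1) ^ ℓ * (k.choose ℓ : R)) • a ^ ℓ := by
  calc (1 - a) ^ k = ((-1 : R) • a + 1) ^ k := by rw [neg_one_smul, neg_add_eq_sub]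
    _ = ∑ ℓ ∈ range (k + 1), ((-1 : R) • a) ^ ℓ * 1 ^ (k - ℓ) * k.choose ℓ :=
      (Commute.one_right _).add_pow k
    _ = ∑ ℓ ∈ range (k + 1), ((-1) ^ ℓ * (k.choose ℓ : R)) • a ^ ℓ :=
      sum_congr rfl fun ℓ _ => by
        rw [one_pow, mul_one, smul_pow, mul_comm ((-1) ^ ℓ), mul_smul, Nat.cast_smul_eq_nsmul,
          nsmul_eq_mul']

theorem sum_smul_one_sub_pow (θ : ℕ → R) (K : ℕ) (a : A) :
    ∑ k ∈ range K, θ k • (1 - a) ^ k = ∑ ℓ ∈ range K, derivedCoeff θ K ℓ • a ^ ℓ := by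
  have mem_triangle (k ℓ : ℕ) :
      k ∈ range K ∧ ℓ ∈ range (k + 1) ↔ k ∈ Icc ℓ (K - 1) ∧ ℓ ∈ range K := by
    simp only [mem_range, mem_Icc]
    omega
  calc ∑ k ∈ range K, θ k • (1 - a) ^ k
      = ∑ k ∈ range K, ∑ ℓ ∈ range (k + 1), (θ k * ((-1) ^ ℓ * (k.choose ℓ : R))) • a ^ ℓ := by
        simp_rw [one_sub_pow_eq_sum_smul (R := R) a, smul_sum, smul_smul]
    _ = ∑ ℓ ∈ range K, ∑ k ∈ Icc ℓ (K - 1), (θ k * ((-1) ^ ℓ * (k.choose ℓ : R))) • a ^ ℓ :=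
        sum_comm' mem_triangle
    _ = ∑ ℓ ∈ range K, derivedCoeff θ K ℓ • a ^ ℓ := by
        simp_rw [derivedCoeff, mul_sum, sum_smul, mul_left_comm]

end BinomialExpansion

section Telescoping

/-- The sequence `c 0, c 1 / c 0, c 2 / c 1, …`, whose partial products telescope to `c` when
zeros of `c` are only followed by zeros. In a group with zero the value after a zero of `c` is `0`,
by the convention `x / 0 = 0`. -/
def consecutiveRatio {M : Type*} [DivInvMonoid M] (c : ℕ → M) : ℕ → M
  | 0 => c 0
  | ℓ + 1 => c (ℓ + 1) / c ℓ

theorem prod_range_succ_consecutiveRatio {M : Type*} [CommGroupWithZero M] (c : ℕ → M) (ℓ : ℕ)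
    (hc : ∀ i < ℓ, c i = 0 → c (i + 1) = 0) :
    ∏ i ∈ range (ℓ + 1), consecutiveRatio c i = c ℓ := by
  induction ℓ with
  | zero => exact prod_range_one _
  | succ ℓ ih =>
    rw [prod_range_succ, ih fun i hi => hc i (hi.trans ℓ.lt_succ_self)]
    exact mul_div_cancel_of_imp' (hc ℓ ℓ.lt_succ_self)

theorem prod_Icc_sub_reflect {M : Type*} [CommMonoid M] (f : ℕ → M) {ℓ N : ℕ} (hℓ : ℓ ≤ N) :
    ∏ k ∈ Icc (N - ℓ) N, f (N - k) = ∏ i ∈ range (ℓ + 1), f i := by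
  calc ∏ k ∈ Icc (N - ℓ) N, f (N - k)
      = ∏ k ∈ Ico (N + 1 - (ℓ + 1)) (N + 1 - 0), f (N - k) := by
        rw [Nat.add_sub_add_right, Nat.sub_zero, Ico_add_one_right_eq_Icc]
    _ = ∏ i ∈ Ico 0 (ℓ + 1), f (N - (N - i)) :=
        (prod_Ico_reflect (fun k => f (N - k)) 0 (Nat.succ_le_succ hℓ)).symm
    _ = ∏ i ∈ range (ℓ + 1), f i := by
        rw [← range_eq_Ico]
        refine prod_congr rfl fun i hi => ?_
        rw [Nat.sub_sub_self ((Nat.le_of_lt_succ (mem_range.mp hi)).trans hℓ)]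

theorem exists_prod_Icc_sub_eq {M : Type*} [CommGroupWithZero M] (c : ℕ → M) (N : ℕ)
    (hc : ∀ ℓ < N, c ℓ = 0 → c (ℓ + 1) = 0) :
    ∃ γ : ℕ → M, ∀ ℓ ≤ N, ∏ k ∈ Icc (N - ℓ) N, γ k = c ℓ := by
  refine ⟨fun k => consecutiveRatio c (N - k), fun ℓ hℓ => ?_⟩
  rw [prod_Icc_sub_reflect _ hℓ]
  exact prod_range_succ_consecutiveRatio c ℓ fun i hi => hc i (hi.trans_le hℓ)

end Telescoping

theorem gcnii_expresses_arbitrary_filter_general {F A : Type*} [Field F] [Ring A] [Algebra F A]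
    (L : A) (K : ℕ) (θ : ℕ → F)
    (hc : ∀ ℓ < K - 1, derivedCoeff θ K ℓ = 0 → derivedCoeff θ K (ℓ + 1) = 0) :
    ∃ γ : ℕ → F,
      ∑ ℓ ∈ range K, (∏ k ∈ Icc (K - ℓ - 1) (K - 1), γ k) • (1 - L) ^ ℓ =
        ∑ k ∈ range K, θ k • L ^ k := by
  obtain ⟨γ, hγ⟩ := exists_prod_Icc_sub_eq (derivedCoeff θ K) (K - 1) hc
  refine ⟨γ, ?_⟩
  calc ∑ ℓ ∈ range K, (∏ k ∈ Icc (K - ℓ - 1) (K - 1), γ k) • (1 - L) ^ ℓ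
      = ∑ ℓ ∈ range K, derivedCoeff θ K ℓ • (1 - L) ^ ℓ :=
        sum_congr rfl fun ℓ hℓ => by
          rw [Nat.sub_right_comm, hγ ℓ (Nat.le_sub_one_of_lt (mem_range.mp hℓ))]
    _ = ∑ k ∈ range K, θ k • (1 - (1 - L)) ^ k := (sum_smul_one_sub_pow θ K (1 - L)).symm
    _ = ∑ k ∈ range K, θ k • L ^ k := by rw [sub_sub_cancel]

/-- Theorem 2 of the paper, matrix form. If each derived coefficient
`c_ℓ = (−1)^ℓ ∑_{k=ℓ}^{K−1} θ_k·C(k,ℓ)` is nonzero, then there are scalars `γ_0, …, γ_{K−1}`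
such that `∑_{ℓ=0}^{K−1} (∏_{k=K−ℓ−1}^{K−1} γ_k)·(I − L̃)^ℓ = ∑_{k=0}^{K−1} θ_k L̃^k`. -/
theorem gcnii_expresses_arbitrary_filter {n : ℕ} (G : SimpleGraph (Fin n))
    [DecidableRel G.Adj] (K : ℕ) (hK : 1 ≤ K) (θ : ℕ → ℝ)
    (hc : ∀ ℓ < K,
      (-1 : ℝ) ^ ℓ * ∑ k ∈ Finset.Icc ℓ (K - 1), θ k * (k.choose ℓ : ℝ) ≠ 0) :
    ∃ γ : ℕ → ℝ,
      ∑ ℓ ∈ Finset.range K,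
          (∏ k ∈ Finset.Icc (K - ℓ - 1) (K - 1), γ k) •
            ((1 : Matrix (Fin n) (Fin n) ℝ) - Ltilde G) ^ ℓ =
        ∑ k ∈ Finset.range K, θ k • Ltilde G ^ k :=
  gcnii_expresses_arbitrary_filter_general (Ltilde G) K θ fun ℓ hℓ hzero =>
    absurd hzero (hc ℓ (hℓ.trans_le (K.sub_le 1)))
end
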